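/- Let X be a Lévy process such that S = e^X is a martingale and E[e^{qX_T}] < ∞ for some q ∈ (1,∞). For η ∈ [0,1] define Φ(η)_t := e^{ηX_t} · sup_{s∈[0,t]} e^{(1−η)(X_t − X_s)}. Then Φ(η) ∈ SM_q(P) with ‖Φ(η)‖_{SM_q(P)} ≤ 2^{(1−η)/q} · (q/(q−1))² · ‖e^{X_T}‖_{L_q(P)}. -/

import Mathlib

open MeasureTheory

/-- The set of admissible constants `c` in the definition of the weighted
`SM_q(P)` class: `E[sup_{t∈[a,T]} Φ_t^q | F_a] ≤ c^q Φ_a^q` a.s. for all `a ∈ [0,T]`. -/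
noncomputable def smSet {Ω : Type*} [MeasurableSpace Ω] (P : Measure Ω)
    (ℱ : ℝ → MeasurableSpace Ω) (T q : ℝ) (Φ : ℝ → Ω → ℝ) : Set ℝ :=
  {c : ℝ | 0 ≤ c ∧ ∀ a ∈ Set.Icc (0 : ℝ) T,
    ∀ᵐ ω ∂P, (P[(fun ω' => ⨆ t : Set.Icc a T, Φ t.1 ω' ^ q) | ℱ a]) ω
      ≤ c ^ q * Φ a ω ^ q}

open ProbabilityTheory

lemma aux_young {q a b : ℝ} (hq : 1 < q) (ha : 0 ≤ a) (hb : 0 ≤ b) :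
    a ^ (q - 1) * b ≤ (1 - 1 / q) * a ^ q + b ^ q / q := by
  have hq0 : 0 < q := by linarith
  have hc : (Real.conjExponent q).HolderConjugate q := (Real.HolderConjugate.conjExponent hq).symm
  have h := Real.young_inequality_of_nonneg (a := a ^ (q - 1)) (b := b) (by positivity) hb hc
  rw [← Real.rpow_mul ha] at h
  have e1 : (q - 1) * Real.conjExponent q = q := by
    unfold Real.conjExponent
    field_simp [sub_ne_zero.mpr hq.ne']
  rw [e1] at h
  have e2 : a ^ q / Real.conjExponent q = (1 - 1 / q) * a ^ q := by
    unfold Real.conjExponent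
    have : q - 1 ≠ 0 := sub_ne_zero.mpr hq.ne'
    field_simp
  rwa [e2] at h

lemma aux_pow_mul {q a : ℝ} (hq : 1 < q) (ha : 0 ≤ a) : a ^ (q - 1) * a = a ^ q := by
  conv_lhs => rw [← Real.rpow_one a, ← Real.rpow_mul ha, one_mul]
  rw [← Real.rpow_add' ha (by linarith)]
  congr 1; ring

lemma aux_indep {Ω : Type*} {m1 m2 m3 m0 : MeasurableSpace Ω} {P : Measure Ω}
    [IsProbabilityMeasure P] (h1 : m1 ≤ m0) (h2 : m2 ≤ m0) (h3 : m3 ≤ m0)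
    (h12 : Indep m2 m1 P) (h123 : Indep m3 (m1 ⊔ m2) P) :
    Indep (m3 ⊔ m2) m1 P := by
  have hgen : m3 ⊔ m2 = MeasurableSpace.generateFrom
      (Set.image2 (· ∩ ·) {s | MeasurableSet[m3] s} {s | MeasurableSet[m2] s}) := by
    apply le_antisymm
    · refine sup_le ?_ ?_
      · intro s hs
        exact MeasurableSpace.measurableSet_generateFrom
          ⟨s, hs, Set.univ, MeasurableSet.univ, by simp⟩
      · intro s hs
        exact MeasurableSpace.measurableSet_generateFrom
          ⟨Set.univ, MeasurableSet.univ, s, hs, by simp⟩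
    · refine MeasurableSpace.generateFrom_le ?_
      rintro _ ⟨s, hs, t, ht, rfl⟩
      exact MeasurableSet.inter ((le_sup_left : m3 ≤ m3 ⊔ m2) s hs)
        ((le_sup_right : m2 ≤ m3 ⊔ m2) t ht)
  refine IndepSets.indep (sup_le h3 h2) h1 ?_ (@MeasurableSpace.isPiSystem_measurableSet _ m1) hgen
    (@MeasurableSpace.generateFrom_measurableSet _ m1).symm ?_
  · rintro _ ⟨s, hs, t, ht, rfl⟩ _ ⟨s', hs', t', ht', rfl⟩ _
    exact ⟨s ∩ s', MeasurableSet.inter hs hs', t ∩ t', MeasurableSet.inter ht ht',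
      by ext; simp only [Set.mem_inter_iff]; tauto⟩
  · rw [IndepSets_iff]
    rintro _ A ⟨s, hs, t, ht, rfl⟩ hA
    rw [Indep_iff] at h12 h123
    have hA' : MeasurableSet[m1 ⊔ m2] A := (le_sup_left : m1 ≤ m1 ⊔ m2) A hA
    have ht' : MeasurableSet[m1 ⊔ m2] t := (le_sup_right : m2 ≤ m1 ⊔ m2) t ht
    have e1 := h123 s (t ∩ A) hs (MeasurableSet.inter ht' hA')
    have e2 := h123 s t hs ht'
    have e3 := h12 t A ht hA
    change P ((s ∩ t) ∩ A) = P (s ∩ t) * P A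
    rw [Set.inter_assoc, e1, e2, e3, mul_assoc]

lemma aux_psup_int {Ω : Type*} {m0 : MeasurableSpace Ω} {P : Measure Ω}
    {q : ℝ} (f : ℕ → Ω → ℝ) (hm : ∀ k, Measurable (f k)) (h0 : ∀ k ω, 0 ≤ f k ω)
    (hi : ∀ k, Integrable (fun ω => f k ω ^ q) P) (n : ℕ) :
    Integrable (fun ω => (partialSups (fun i => f i ω) n) ^ q) P := by
  have hms : ∀ n, Measurable (fun ω => partialSups (fun i => f i ω) n) := by
    intro n
    induction n with
    | zero => simpa using hm 0
    | succ n ih =>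
      simp only [partialSups_add_one]
      exact ih.sup (hm (n+1))
  induction n with
  | zero => simpa using hi 0
  | succ n ih =>
    refine (ih.add (hi (n+1))).mono' ((hms (n+1)).pow_const q).aestronglyMeasurable ?_
    refine Filter.Eventually.of_forall fun ω => ?_
    have hp : 0 ≤ partialSups (fun i => f i ω) n :=
      (h0 0 ω).trans (le_partialSups_of_le (fun i => f i ω) (Nat.zero_le n))
    have hp' : 0 ≤ partialSups (fun i => f i ω) (n+1) :=
      (h0 0 ω).trans (le_partialSups_of_le (fun i => f i ω) (Nat.zero_le _))
    rw [Real.norm_of_nonneg (Real.rpow_nonneg hp' _)]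
    simp only [Pi.add_apply, partialSups_add_one]
    rcases le_total (partialSups (fun i => f i ω) n) (f (n+1) ω) with h | h
    · rw [sup_eq_right.mpr h]; linarith [Real.rpow_nonneg hp q]
    · rw [sup_eq_left.mpr h]; linarith [Real.rpow_nonneg (h0 (n+1) ω) q]

lemma aux_doob {Ω : Type*} {m0 : MeasurableSpace Ω} {P : Measure Ω} [IsProbabilityMeasure P]
    {q : ℝ} (hq : 1 < q) (G : ℕ → MeasurableSpace Ω) (hG : Monotone G) (hGle : ∀ k, G k ≤ m0)
    (f Y : ℕ → Ω → ℝ) (hm : ∀ k, Measurable[G k] (f k)) (h0 : ∀ k ω, 0 ≤ f k ω)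
    (hi : ∀ k, Integrable (fun ω => f k ω ^ q) P)
    (hYi : ∀ k, Integrable (Y k) P) (hY1 : ∀ k, ∫ ω, Y k ω ∂P = 1)
    (hind : ∀ k, Indep (MeasurableSpace.comap (Y k) inferInstance) (G k) P)
    (hstep : ∀ k ω, f k ω * Y k ω ≤ f (k+1) ω) (n : ℕ) :
    ∫ ω, (partialSups (fun i => f i ω) n) ^ q ∂P ≤ (q / (q - 1)) ^ q * ∫ ω, f n ω ^ q ∂P := by
  have hq0 : 0 < q := by linarith
  have hq1 : 0 < q - 1 := by linarith
  have hm' : ∀ k, Measurable (f k) := fun k => (hm k).mono (hGle k) le_rfl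
  set M : ℕ → Ω → ℝ := fun n ω => partialSups (fun i => f i ω) n with hM
  have hMG : ∀ n, Measurable[G n] (M n) := by
    intro n
    induction n with
    | zero => simpa [hM] using hm 0
    | succ n ih =>
      simp only [hM, partialSups_add_one]
      exact (ih.mono (hG (Nat.le_succ n)) le_rfl).sup (hm (n+1))
  have hMm : ∀ n, Measurable (M n) := fun n => (hMG n).mono (hGle n) le_rfl
  have hM0 : ∀ n ω, 0 ≤ M n ω := fun n ω =>
      (h0 0 ω).trans (le_partialSups_of_le (fun i => f i ω) (Nat.zero_le n))
  have hMi : ∀ n, Integrable (fun ω => M n ω ^ q) P := aux_psup_int f hm' h0 hi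
  have hprod : ∀ k l, Integrable (fun ω => M k ω ^ (q - 1) * f l ω) P := by
    intro k l
    refine (((hMi k).const_mul (1 - 1/q)).add ((hi l).div_const q)).mono'
      (((hMm k).pow_const _).mul (hm' l)).aestronglyMeasurable ?_
    refine Filter.Eventually.of_forall fun ω => ?_
    rw [Real.norm_of_nonneg (mul_nonneg (Real.rpow_nonneg (hM0 _ _) _) (h0 _ _))]
    exact aux_young hq (hM0 _ _) (h0 _ _)
  have key : ∀ k, 0 ≤ ∫ ω, (M k ω ^ (q-1) * f k ω - (1 - 1/q) * M k ω ^ q) ∂P := by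
    intro k
    induction k with
    | zero =>
      refine integral_nonneg fun ω => ?_
      simp only [hM, partialSups_zero, Pi.zero_apply]
      rw [aux_pow_mul hq (h0 0 ω)]
      have : 0 ≤ 1 / q * f 0 ω ^ q := mul_nonneg (by positivity) (Real.rpow_nonneg (h0 0 ω) q)
      linarith
    | succ k ih =>
      have hindF : IndepFun (fun ω => M k ω ^ (q-1) * f k ω) (Y k) P := by
        rw [IndepFun_iff_Indep]
        refine indep_of_indep_of_le_left (hind k).symm ?_
        exact (((hMG k).pow_const _).mul (hm k)).comap_le
      have e1 : ∫ ω, (M k ω ^ (q-1) * f k ω) * Y k ω ∂P = ∫ ω, M k ω ^ (q-1) * f k ω ∂P := by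
        have := hindF.integral_fun_mul_eq_mul_integral (hprod k k).aestronglyMeasurable
          (hYi k).aestronglyMeasurable
        rw [this, hY1 k, mul_one]
      have hprY : Integrable (fun ω => (M k ω ^ (q-1) * f k ω) * Y k ω) P :=
        hindF.integrable_mul (hprod k k) (hYi k)
      calc (0:ℝ) ≤ ∫ ω, (M k ω ^ (q-1) * f k ω - (1 - 1/q) * M k ω ^ q) ∂P := ih
        _ = ∫ ω, ((M k ω ^ (q-1) * f k ω) * Y k ω - (1 - 1/q) * M k ω ^ q) ∂P := by
          rw [integral_sub (hprod k k) ((hMi k).const_mul _),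
            integral_sub hprY ((hMi k).const_mul _), e1]
        _ ≤ _ := by
          refine integral_mono (hprY.sub ((hMi k).const_mul _))
            ((hprod (k+1) (k+1)).sub ((hMi (k+1)).const_mul _)) fun ω => ?_
          have hs := mul_le_mul_of_nonneg_left (hstep k ω) (Real.rpow_nonneg (hM0 k ω) (q-1))
          have hMs : M (k+1) ω = M k ω ⊔ f (k+1) ω := by
            simp only [hM, partialSups_add_one]
          simp only
          rw [hMs]
          rcases le_total (M k ω) (f (k+1) ω) with h | h
          · rw [sup_eq_right.mpr h, aux_pow_mul hq (h0 _ ω)]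
            have hy := aux_young hq (hM0 k ω) (h0 (k+1) ω)
            have : f (k+1) ω ^ q / q = f (k+1) ω ^ q - (1 - 1/q) * f (k+1) ω ^ q := by ring
            nlinarith
          · rw [sup_eq_left.mpr h]
            nlinarith
  have hc : 0 < q / (q-1) := by positivity
  have hfin : ∫ ω, M n ω ^ q ∂P - 1/q * ∫ ω, M n ω ^ q ∂P ≤ (1 - 1/q) * ((1 - 1/q) * ∫ ω, M n ω ^ q ∂P + 1/q * ((q/(q-1))^q * ∫ ω, f n ω ^ q ∂P)) := by
    have h1 := key n
    rw [integral_sub (hprod n n) ((hMi n).const_mul _), integral_const_mul] at h1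
    have h2 : ∫ ω, M n ω ^ (q-1) * (q/(q-1) * f n ω) ∂P ≤
        ∫ ω, ((1 - 1/q) * M n ω ^ q + 1/q * ((q/(q-1))^q * f n ω ^ q)) ∂P := by
      refine integral_mono ?_ (((hMi n).const_mul _).add (((hi n).const_mul _).const_mul _)) fun ω => ?_
      · refine ((hprod n n).const_mul (q/(q-1))).congr (Filter.Eventually.of_forall fun ω => ?_)
        simp only; ring
      · have := aux_young hq (hM0 n ω) (mul_nonneg hc.le (h0 n ω))
        rw [Real.mul_rpow hc.le (h0 n ω)] at this
        simp only
        linarith [show (q/(q-1))^q * f n ω ^ q / q = 1/q * ((q/(q-1))^q * f n ω ^ q) by ring]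
    rw [integral_add ((hMi n).const_mul _) (((hi n).const_mul _).const_mul _), integral_const_mul,
      integral_const_mul, integral_const_mul] at h2
    have h3 : ∫ ω, M n ω ^ (q-1) * (q/(q-1) * f n ω) ∂P = q/(q-1) * ∫ ω, M n ω ^ (q-1) * f n ω ∂P := by
      rw [← integral_const_mul]; congr 1; ext ω; ring
    rw [h3] at h2
    have h4 : ∫ ω, M n ω ^ (q-1) * f n ω ∂P = (1 - 1/q) * (q/(q-1) * ∫ ω, M n ω ^ (q-1) * f n ω ∂P) := by
      field_simp
    have h5 : 0 ≤ 1 - 1/q := by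
      rw [sub_nonneg, div_le_one hq0]; exact hq.le
    have := mul_le_mul_of_nonneg_left h2 h5
    linarith
  have h5 : 0 < 1 - 1/q := by
    rw [sub_pos, div_lt_one hq0]; exact hq
  have h6 : 0 < 1/q := by positivity
  have h7 : ∫ ω, M n ω ^ q ∂P ≤ (1 - 1/q) * ∫ ω, M n ω ^ q ∂P + 1/q * ((q/(q-1))^q * ∫ ω, f n ω ^ q ∂P) := by
    refine le_of_mul_le_mul_left ?_ h5
    linarith
  refine le_of_mul_le_mul_left ?_ h6
  linarith

lemma aux_psup_meas {Ω : Type*} {m : MeasurableSpace Ω} (f : ℕ → Ω → ℝ) (n : ℕ)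
    (hf : ∀ j ≤ n, Measurable (f j)) : Measurable (fun ω => partialSups (fun i => f i ω) n) := by
  induction n with
  | zero => simpa using hf 0 le_rfl
  | succ n ih =>
    simp only [partialSups_add_one]
    exact (ih fun j hj => hf j (hj.trans (Nat.le_succ n))).sup (hf (n+1) le_rfl)

/-- The hypotheses on the process, bundled. -/
structure ProcHyp {Ω : Type*} [m0 : MeasurableSpace Ω] (P : Measure Ω)
    (ℱ : ℝ → MeasurableSpace Ω) (T q : ℝ) (X : ℝ → Ω → ℝ) : Prop where
  le : ∀ t, ℱ t ≤ m0
  mono : Monotone ℱ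
  hT : 0 < T
  hq : 1 < q
  hX0 : ∀ ω, X 0 ω = 0
  ad : ∀ t, Measurable[ℱ t] (X t)
  rc : ∀ ω t, ContinuousWithinAt (fun s => X s ω) (Set.Ici t) t
  indep : ∀ s t : ℝ, 0 ≤ s → s ≤ t →
      ProbabilityTheory.Indep
        (MeasurableSpace.comap (fun ω => X t ω - X s ω) inferInstance) (ℱ s) P
  int : Integrable (fun ω => Real.exp (q * X T ω)) P
  mart : ∀ s t : ℝ, 0 ≤ s → s ≤ t → t ≤ T →
      (fun ω => Real.exp (X s ω)) =ᵐ[P] P[(fun ω => Real.exp (X t ω)) | ℱ s]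

namespace ProcHyp

set_option linter.unusedSectionVars false

variable {Ω : Type*} [m0 : MeasurableSpace Ω] {P : Measure Ω} [IsProbabilityMeasure P]
    {ℱ : ℝ → MeasurableSpace Ω} {T q : ℝ} {X : ℝ → Ω → ℝ}

lemma meas (h : ProcHyp P ℱ T q X) (t : ℝ) : Measurable (X t) := (h.ad t).mono (h.le t) le_rfl

lemma fac (h : ProcHyp P ℱ T q X) (p : ℝ) {s t u : ℝ} (hs : 0 ≤ s) (hst : s ≤ t) (htu : t ≤ u) :
    ∫⁻ ω, ENNReal.ofReal (Real.exp (p * (X u ω - X s ω))) ∂P =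
    (∫⁻ ω, ENNReal.ofReal (Real.exp (p * (X u ω - X t ω))) ∂P) *
      ∫⁻ ω, ENNReal.ofReal (Real.exp (p * (X t ω - X s ω))) ∂P := by
  have hm : Measurable (fun ω => X u ω - X t ω) := (h.meas u).sub (h.meas t)
  have := lintegral_mul_eq_lintegral_mul_lintegral_of_independent_measurableSpace
    (hm.comap_le) (h.le t) (h.indep t u (hs.trans hst) htu)
    (f := fun ω => ENNReal.ofReal (Real.exp (p * (X u ω - X t ω))))
    (g := fun ω => ENNReal.ofReal (Real.exp (p * (X t ω - X s ω)))) ?_ ?_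
  · rw [← this]
    congr 1; ext ω
    rw [← ENNReal.ofReal_mul (Real.exp_pos _).le, ← Real.exp_add]
    congr 2; ring
  · have h1 : Measurable (fun x : ℝ => ENNReal.ofReal (Real.exp (p * x))) := by fun_prop
    exact h1.comp (comap_measurable _)
  · have h1 : Measurable (fun x : ℝ => ENNReal.ofReal (Real.exp (p * x))) := by fun_prop
    exact h1.comp ((h.ad t).sub ((h.ad s).mono (h.mono hst) le_rfl))

lemma int_exp (h : ProcHyp P ℱ T q X) {t : ℝ} (ht : 0 ≤ t) (htT : t ≤ T) :
    Integrable (fun ω => Real.exp (X t ω)) P :=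
  integrable_condExp.congr (h.mart t T ht htT le_rfl).symm

lemma L1 (h : ProcHyp P ℱ T q X) {t : ℝ} (ht : 0 ≤ t) (htT : t ≤ T) :
    ∫⁻ ω, ENNReal.ofReal (Real.exp (1 * (X t ω - X 0 ω))) ∂P = 1 := by
  simp only [h.hX0, sub_zero, one_mul]
  rw [← ofReal_integral_eq_lintegral_ofReal (h.int_exp ht htT)
    (Filter.Eventually.of_forall fun ω => (Real.exp_pos _).le)]
  have h1 := integral_congr_ae (h.mart 0 t le_rfl ht htT)
  rw [integral_condExp (h.le 0)] at h1
  rw [← h1]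
  simp [h.hX0]

lemma L1' (h : ProcHyp P ℱ T q X) {s t : ℝ} (hs : 0 ≤ s) (hst : s ≤ t) (htT : t ≤ T) :
    ∫⁻ ω, ENNReal.ofReal (Real.exp (1 * (X t ω - X s ω))) ∂P = 1 := by
  have := h.fac 1 le_rfl hs hst
  rw [h.L1 (hs.trans hst) htT, h.L1 hs (hst.trans htT), mul_one] at this
  exact this.symm

lemma int_inc (h : ProcHyp P ℱ T q X) {s t : ℝ} (hs : 0 ≤ s) (hst : s ≤ t) (htT : t ≤ T) :
    Integrable (fun ω => Real.exp (X t ω - X s ω)) P := by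
  refine ⟨((h.meas t).sub (h.meas s)).exp.aestronglyMeasurable, ?_⟩
  rw [hasFiniteIntegral_iff_ofReal (Filter.Eventually.of_forall fun ω => (Real.exp_pos _).le)]
  have := h.L1' hs hst htT
  simp only [one_mul] at this
  rw [this]; exact ENNReal.one_lt_top

lemma mean_inc (h : ProcHyp P ℱ T q X) {s t : ℝ} (hs : 0 ≤ s) (hst : s ≤ t) (htT : t ≤ T) :
    ∫ ω, Real.exp (X t ω - X s ω) ∂P = 1 := by
  rw [integral_eq_lintegral_of_nonneg_ae (f := fun ω => Real.exp (X t ω - X s ω))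
    (Filter.Eventually.of_forall fun ω => (Real.exp_pos _).le)
    ((h.meas t).sub (h.meas s)).exp.aestronglyMeasurable]
  have := h.L1' hs hst htT
  simp only [one_mul] at this
  rw [this]; rfl

lemma Lq_ge (h : ProcHyp P ℱ T q X) {s t : ℝ} (hs : 0 ≤ s) (hst : s ≤ t) (htT : t ≤ T) :
    1 ≤ ∫⁻ ω, ENNReal.ofReal (Real.exp (q * (X t ω - X s ω))) ∂P := by
  have hq := h.hq
  have hq0 : 0 < q := by linarith
  by_cases hi : Integrable (fun ω => Real.exp (q * (X t ω - X s ω))) P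
  · rw [← ofReal_integral_eq_lintegral_ofReal hi
      (Filter.Eventually.of_forall fun ω => (Real.exp_pos _).le)]
    rw [← ENNReal.ofReal_one]
    refine ENNReal.ofReal_le_ofReal ?_
    have h1 : ∫ ω, Real.exp (X t ω - X s ω) ∂P ≤
        ∫ ω, ((1 - 1/q) + Real.exp (q * (X t ω - X s ω)) / q) ∂P := by
      refine integral_mono (h.int_inc hs hst htT) ((integrable_const _).add (hi.div_const q))
        fun ω => ?_
      have := aux_young hq zero_le_one (Real.exp_pos (X t ω - X s ω)).le
      simp only [Real.one_rpow, one_mul, mul_one] at this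
      rwa [← Real.exp_mul, mul_comm _ q] at this
    rw [h.mean_inc hs hst htT, integral_add (integrable_const _) (hi.div_const q),
      integral_div] at h1
    simp only [integral_const, probReal_univ, smul_eq_mul, one_mul] at h1
    have h2 : 1 / q ≤ (∫ ω, Real.exp (q * (X t ω - X s ω)) ∂P) / q := by linarith
    exact (div_le_div_iff_of_pos_right hq0).mp h2
  · by_contra hlt
    push Not at hlt
    refine hi ⟨(((h.meas t).sub (h.meas s)).const_mul q).exp.aestronglyMeasurable, ?_⟩
    rw [hasFiniteIntegral_iff_ofReal (Filter.Eventually.of_forall fun ω => (Real.exp_pos _).le)]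
    exact hlt.trans ENNReal.one_lt_top

lemma Lq_le (h : ProcHyp P ℱ T q X) {s t : ℝ} (hs : 0 ≤ s) (hst : s ≤ t) (htT : t ≤ T) :
    ∫⁻ ω, ENNReal.ofReal (Real.exp (q * (X t ω - X s ω))) ∂P ≤
      ENNReal.ofReal (∫ ω, Real.exp (q * X T ω) ∂P) := by
  have e := ofReal_integral_eq_lintegral_ofReal h.int
      (Filter.Eventually.of_forall fun ω => (Real.exp_pos _).le)
  have e0 : ∫⁻ ω, ENNReal.ofReal (Real.exp (q * X T ω)) ∂P =
      ∫⁻ ω, ENNReal.ofReal (Real.exp (q * (X T ω - X 0 ω))) ∂P := by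
    simp only [h.hX0, sub_zero]
  rw [e, e0, h.fac q le_rfl hs (hst.trans htT), h.fac q hs hst htT]
  have h1 := h.Lq_ge le_rfl hs (hst.trans htT)
  have h2 := h.Lq_ge (hs.trans hst) htT le_rfl
  calc _ = 1 * (∫⁻ ω, ENNReal.ofReal (Real.exp (q * (X t ω - X s ω))) ∂P) * 1 := by simp
    _ ≤ _ := by gcongr

lemma int_q (h : ProcHyp P ℱ T q X) {s t : ℝ} (hs : 0 ≤ s) (hst : s ≤ t) (htT : t ≤ T) :
    Integrable (fun ω => Real.exp (X t ω - X s ω) ^ q) P := by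
  have : (fun ω => Real.exp (X t ω - X s ω) ^ q) = fun ω => Real.exp (q * (X t ω - X s ω)) := by
    ext ω; rw [← Real.exp_mul, mul_comm]
  rw [this]
  refine ⟨(((h.meas t).sub (h.meas s)).const_mul q).exp.aestronglyMeasurable, ?_⟩
  rw [hasFiniteIntegral_iff_ofReal (Filter.Eventually.of_forall fun ω => (Real.exp_pos _).le)]
  exact (h.Lq_le hs hst htT).trans_lt ENNReal.ofReal_lt_top

lemma mean_q (h : ProcHyp P ℱ T q X) {s t : ℝ} (hs : 0 ≤ s) (hst : s ≤ t) (htT : t ≤ T) :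
    ∫ ω, Real.exp (X t ω - X s ω) ^ q ∂P ≤ ∫ ω, Real.exp (q * X T ω) ∂P := by
  have e := ofReal_integral_eq_lintegral_ofReal (h.int_q hs hst htT)
      (Filter.Eventually.of_forall fun ω => (Real.rpow_nonneg (Real.exp_pos _).le _))
  have : (fun ω => Real.exp (X t ω - X s ω) ^ q) = fun ω => Real.exp (q * (X t ω - X s ω)) := by
    ext ω; rw [← Real.exp_mul, mul_comm]
  refine (ENNReal.ofReal_le_ofReal_iff (integral_nonneg fun ω => (Real.exp_pos _).le)).mp ?_
  rw [e]
  have e2 : (fun ω => ENNReal.ofReal (Real.exp (X t ω - X s ω) ^ q)) =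
      fun ω => ENNReal.ofReal (Real.exp (q * (X t ω - X s ω))) := by
    ext ω; rw [← Real.exp_mul, mul_comm]
  rw [e2]
  exact h.Lq_le hs hst htT

/-- the reversed sigma-algebras generated by grid increments -/
def rev (X : ℝ → Ω → ℝ) (τ : ℕ → ℝ) (n : ℕ) : ℕ → MeasurableSpace Ω
  | 0 => ⊥
  | k + 1 => rev X τ n k ⊔
      MeasurableSpace.comap (fun ω => X (τ (n - k)) ω - X (τ (n - (k + 1))) ω) inferInstance

lemma rev_mono (τ : ℕ → ℝ) (n : ℕ) : Monotone (rev X τ n) :=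
  monotone_nat_of_le_succ fun _ => le_sup_left

lemma rev_le (h : ProcHyp P ℱ T q X) (τ : ℕ → ℝ) (n k : ℕ) : rev X τ n k ≤ m0 := by
  induction k with
  | zero => exact bot_le
  | succ k ih => exact sup_le ih ((h.meas _).sub (h.meas _)).comap_le

lemma rev_indep (h : ProcHyp P ℱ T q X) {τ : ℕ → ℝ} (hτ : Monotone τ) (hτ0 : 0 ≤ τ 0) (n k : ℕ) :
    Indep (rev X τ n k) (ℱ (τ (n - k))) P := by
  induction k with
  | zero => exact indep_bot_left _
  | succ k ih =>
    have h0 : ∀ i, 0 ≤ τ i := fun i => hτ0.trans (hτ (Nat.zero_le i))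
    have hle : τ (n - (k+1)) ≤ τ (n - k) := hτ (by omega)
    refine aux_indep (h.le _) ((h.meas _).sub (h.meas _)).comap_le (h.rev_le τ n k)
      (h.indep _ _ (h0 _) hle) ?_
    refine indep_of_indep_of_le_right ih (sup_le (h.mono hle) ?_)
    exact ((h.ad _).sub ((h.ad _).mono (h.mono hle) le_rfl)).comap_le

lemma rev_meas_step (τ : ℕ → ℝ) (n : ℕ) {k m : ℕ} (hk : k < m) :
    Measurable[rev X τ n m] (fun ω => X (τ (n - k)) ω - X (τ (n - (k + 1))) ω) := by
  refine Measurable.mono (comap_measurable _) ?_ le_rfl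
  exact (le_sup_right : _ ≤ rev X τ n (k+1)).trans (rev_mono τ n hk)

lemma rev_meas_R (τ : ℕ → ℝ) (n m : ℕ) :
    Measurable[rev X τ n m] (fun ω => X (τ n) ω - X (τ (n - m)) ω) := by
  induction m with
  | zero => simp
  | succ m ih =>
    have h1 := (ih.mono (rev_mono τ n (Nat.le_succ m)) le_rfl).add
      (rev_meas_step (X := X) τ n (Nat.lt_succ_self m))
    convert h1 using 2
    simp

lemma rev_meas_inc (τ : ℕ → ℝ) (n : ℕ) {j k : ℕ} (hj : j ≤ n) (hk : k ≤ n) :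
    Measurable[rev X τ n n] (fun ω => X (τ k) ω - X (τ j) ω) := by
  have h1 := (rev_meas_R (X := X) τ n (n - j)).mono (rev_mono τ n (Nat.sub_le n j)) le_rfl
  have h2 := (rev_meas_R (X := X) τ n (n - k)).mono (rev_mono τ n (Nat.sub_le n k)) le_rfl
  rw [Nat.sub_sub_self hj] at h1
  rw [Nat.sub_sub_self hk] at h2
  convert h1.sub h2 using 2
  simp

lemma step2 (h : ProcHyp P ℱ T q X) {τ : ℕ → ℝ} (hτ : Monotone τ) (hτ0 : 0 ≤ τ 0)
    (hτT : ∀ i, τ i ≤ T) (n : ℕ) :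
    Integrable (fun ω => (partialSups (fun i => Real.exp (X (τ n) ω - X (τ i) ω)) n) ^ q) P ∧
    ∫ ω, (partialSups (fun i => Real.exp (X (τ n) ω - X (τ i) ω)) n) ^ q ∂P ≤
      (q / (q - 1)) ^ q * ∫ ω, Real.exp (q * X T ω) ∂P := by
  have hq := h.hq
  have h0 : ∀ i, 0 ≤ τ i := fun i => hτ0.trans (hτ (Nat.zero_le i))
  have heq : ∀ ω, partialSups (fun i => Real.exp (X (τ n) ω - X (τ i) ω)) n =
      partialSups (fun i => Real.exp (X (τ n) ω - X (τ (n - i)) ω)) n := by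
    intro ω
    apply le_antisymm
    · refine partialSups_le _ _ _ fun j hj => ?_
      have := le_partialSups_of_le (fun i => Real.exp (X (τ n) ω - X (τ (n - i)) ω))
        (Nat.sub_le n j)
      rwa [Nat.sub_sub_self hj] at this
    · refine partialSups_le _ _ _ fun j hj => ?_
      exact le_partialSups_of_le (fun i => Real.exp (X (τ n) ω - X (τ i) ω)) (Nat.sub_le n j)
  simp only [heq]
  have hi : ∀ k, Integrable (fun ω => Real.exp (X (τ n) ω - X (τ (n - k)) ω) ^ q) P :=
    fun k => h.int_q (h0 _) (hτ (Nat.sub_le n k)) (hτT n)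
  refine ⟨aux_psup_int (fun k ω => Real.exp (X (τ n) ω - X (τ (n - k)) ω))
    (fun k => ((h.meas _).sub (h.meas _)).exp) (fun k ω => (Real.exp_pos _).le) hi n, ?_⟩
  have hle : ∀ k, τ (n - (k+1)) ≤ τ (n - k) := fun k => hτ (by omega)
  refine (aux_doob hq (rev X τ n) (rev_mono τ n) (h.rev_le τ n)
    (fun k ω => Real.exp (X (τ n) ω - X (τ (n - k)) ω))
    (fun k ω => Real.exp (X (τ (n - k)) ω - X (τ (n - (k + 1))) ω))
    (fun k => (rev_meas_R τ n k).exp)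
    (fun k ω => (Real.exp_pos _).le) hi
    (fun k => h.int_inc (h0 _) (hle k) (hτT _)) (fun k => h.mean_inc (h0 _) (hle k) (hτT _))
    (fun k => ?_) (fun k ω => ?_) n).trans ?_
  · refine (indep_of_indep_of_le_right (h.rev_indep hτ hτ0 n k) ?_).symm
    exact ((h.ad _).sub ((h.ad _).mono (h.mono (hle k)) le_rfl)).exp.comap_le
  · rw [← Real.exp_add]; apply le_of_eq; congr 1; ring
  · have : 0 < q - 1 := by linarith
    refine mul_le_mul_of_nonneg_left ?_ (by positivity)
    exact h.mean_q (h0 _) (hτ (Nat.sub_le n n)) (hτT n)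

/-- maximum over ordered grid pairs, to the power q -/
noncomputable def gridMax (X : ℝ → Ω → ℝ) (q : ℝ) (τ : ℕ → ℝ) (n : ℕ) (ω : Ω) : ℝ :=
  (partialSups (fun k => partialSups (fun i => Real.exp (X (τ k) ω - X (τ i) ω)) k) n) ^ q

lemma step1 (h : ProcHyp P ℱ T q X) {τ : ℕ → ℝ} (hτ : Monotone τ) (hτ0 : 0 ≤ τ 0)
    (hτT : ∀ i, τ i ≤ T) (n : ℕ) :
    Integrable (gridMax X q τ n) P ∧ ∫ ω, gridMax X q τ n ω ∂P ≤
      (q / (q - 1)) ^ q * ((q / (q - 1)) ^ q * ∫ ω, Real.exp (q * X T ω) ∂P) := by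
  have hq := h.hq
  have h0 : ∀ i, 0 ≤ τ i := fun i => hτ0.trans (hτ (Nat.zero_le i))
  have hpos : ∀ k ω, 0 ≤ partialSups (fun i => Real.exp (X (τ k) ω - X (τ i) ω)) k := fun k ω =>
    (Real.exp_pos _).le.trans
      (le_partialSups_of_le (fun i => Real.exp (X (τ k) ω - X (τ i) ω)) (Nat.zero_le k))
  have hmF : ∀ k, Measurable[ℱ (τ k)]
      (fun ω => partialSups (fun i => Real.exp (X (τ k) ω - X (τ i) ω)) k) := fun k =>
    aux_psup_meas (m := ℱ (τ k)) (fun i ω => Real.exp (X (τ k) ω - X (τ i) ω)) k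
      fun j hj => ((h.ad _).sub ((h.ad _).mono (h.mono (hτ hj)) le_rfl)).exp
  have hi := fun k => (h.step2 hτ hτ0 hτT k).1
  have hle : ∀ k, τ k ≤ τ (k+1) := fun k => hτ (Nat.le_succ k)
  refine ⟨aux_psup_int
    (fun k ω => partialSups (fun i => Real.exp (X (τ k) ω - X (τ i) ω)) k)
    (fun k => (hmF k).mono (h.le _) le_rfl) hpos hi n, ?_⟩
  refine (aux_doob hq (fun k => ℱ (τ k)) (fun i j hij => h.mono (hτ hij)) (fun k => h.le _)
    (fun k ω => partialSups (fun i => Real.exp (X (τ k) ω - X (τ i) ω)) k)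
    (fun k ω => Real.exp (X (τ (k + 1)) ω - X (τ k) ω)) hmF hpos hi
    (fun k => h.int_inc (h0 _) (hle k) (hτT _)) (fun k => h.mean_inc (h0 _) (hle k) (hτT _))
    (fun k => ?_) (fun k ω => ?_) n).trans ?_
  · refine indep_of_indep_of_le_left (h.indep _ _ (h0 k) (hle k)) ?_
    exact (Real.measurable_exp.comp (comap_measurable (fun ω => X (τ (k+1)) ω - X (τ k) ω))).comap_le
  · rw [← le_div_iff₀ (Real.exp_pos _)]
    refine partialSups_le _ _ _ fun j hj => ?_
    rw [le_div_iff₀ (Real.exp_pos _), ← Real.exp_add]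
    have := le_partialSups_of_le (fun i => Real.exp (X (τ (k+1)) ω - X (τ i) ω))
      (hj.trans (Nat.le_succ k))
    refine le_trans (le_of_eq ?_) this
    congr 1; ring
  · have : 0 < q - 1 := by linarith
    gcongr
    exact (h.step2 hτ hτ0 hτT n).2

lemma gridMax_meas (X : ℝ → Ω → ℝ) (q : ℝ) (τ : ℕ → ℝ) (n : ℕ) :
    Measurable[rev X τ n n] (gridMax X q τ n) := by
  refine Measurable.pow_const ?_ q
  refine aux_psup_meas (m := rev X τ n n)
    (fun k ω => partialSups (fun i => Real.exp (X (τ k) ω - X (τ i) ω)) k) n fun k hk => ?_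
  exact aux_psup_meas (m := rev X τ n n) (fun i ω => Real.exp (X (τ k) ω - X (τ i) ω)) k
    fun j hj => (rev_meas_inc τ n (hj.trans hk) hk).exp

lemma gridMax_nonneg (X : ℝ → Ω → ℝ) (q : ℝ) (τ : ℕ → ℝ) (n : ℕ) (ω : Ω) :
    0 ≤ gridMax X q τ n ω := by
  refine Real.rpow_nonneg ?_ _
  exact ((Real.exp_pos (X (τ 0) ω - X (τ 0) ω)).le.trans (by simp)).trans (le_partialSups_of_le
    (fun k => partialSups (fun i => Real.exp (X (τ k) ω - X (τ i) ω)) k) (Nat.zero_le n))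

lemma le_gridMax (X : ℝ → Ω → ℝ) {q : ℝ} (hq : 0 ≤ q) (τ : ℕ → ℝ) {n i k : ℕ} (hik : i ≤ k)
    (hkn : k ≤ n) (ω : Ω) : Real.exp (X (τ k) ω - X (τ i) ω) ^ q ≤ gridMax X q τ n ω := by
  refine Real.rpow_le_rpow (Real.exp_pos _).le ?_ hq
  exact (le_partialSups_of_le (fun i => Real.exp (X (τ k) ω - X (τ i) ω)) hik).trans
    (le_partialSups_of_le
    (fun k => partialSups (fun i => Real.exp (X (τ k) ω - X (τ i) ω)) k) hkn)

lemma grid_set (h : ProcHyp P ℱ T q X) {τ : ℕ → ℝ} (hτ : Monotone τ) (hτ0 : 0 ≤ τ 0)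
    (hτT : ∀ i, τ i ≤ T) (n : ℕ) {A : Set Ω} (hA : MeasurableSet[ℱ (τ 0)] A) :
    ∫⁻ ω in A, ENNReal.ofReal (gridMax X q τ n ω) ∂P ≤
      ENNReal.ofReal
        ((q / (q - 1)) ^ q * ((q / (q - 1)) ^ q * ∫ ω, Real.exp (q * X T ω) ∂P)) * P A := by
  obtain ⟨hi, hb⟩ := h.step1 hτ hτ0 hτT n
  have hind := h.rev_indep hτ hτ0 n n
  rw [Nat.sub_self] at hind
  have := lintegral_mul_eq_lintegral_mul_lintegral_of_independent_measurableSpace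
    (h.rev_le τ n n) (h.le (τ 0)) hind
    (f := fun ω => ENNReal.ofReal (gridMax X q τ n ω))
    (g := A.indicator (fun _ => (1 : ENNReal))) (gridMax_meas X q τ n).ennreal_ofReal
    (measurable_const.indicator hA)
  have hA' : MeasurableSet A := h.le _ A hA
  rw [lintegral_indicator hA', setLIntegral_one] at this
  calc _ = ∫⁻ ω, ENNReal.ofReal (gridMax X q τ n ω) * A.indicator (fun _ => 1) ω ∂P := by
        rw [← lintegral_indicator hA']
        congr 1; ext ω
        by_cases hω : ω ∈ A <;> simp [hω]
    _ = (∫⁻ ω, ENNReal.ofReal (gridMax X q τ n ω) ∂P) * P A := this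
    _ ≤ _ := by
        gcongr
        rw [← ofReal_integral_eq_lintegral_ofReal hi
          (Filter.Eventually.of_forall fun ω => gridMax_nonneg X q τ n ω)]
        exact ENNReal.ofReal_le_ofReal hb

/-- uniform grid -/
noncomputable def grid (a T : ℝ) (n i : ℕ) : ℝ := min T (a + i * ((T - a) / (n + 1)))

lemma grid_mono {a T : ℝ} (h : a ≤ T) (n : ℕ) : Monotone (grid a T n) := by
  intro i j hij
  have h1 : (0:ℝ) ≤ (T - a) / (n + 1) := div_nonneg (by linarith) (by positivity)
  have h2 : (i:ℝ) ≤ j := by exact_mod_cast hij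
  unfold grid
  gcongr

lemma grid_zero {a T : ℝ} (h : a ≤ T) (n : ℕ) : grid a T n 0 = a := by
  simp [grid, h]

/-- grid index to the right of x -/
noncomputable def gidx (a T : ℝ) (n : ℕ) (x : ℝ) : ℕ := ⌈(x - a) * (n + 1) / (T - a)⌉₊

lemma gidx_mono {a T : ℝ} (h : a ≤ T) (n : ℕ) {x y : ℝ} (hxy : x ≤ y) :
    gidx a T n x ≤ gidx a T n y := by
  refine Nat.ceil_mono ?_
  have : 0 ≤ T - a := by linarith
  gcongr

lemma gidx_le {a T : ℝ} (h : a ≤ T) (n : ℕ) {x : ℝ} (hx : x ≤ T) :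
    gidx a T n x ≤ n + 1 := by
  refine Nat.ceil_le.mpr ?_
  push_cast
  rcases h.eq_or_lt with rfl | h
  · simp; positivity
  · rw [div_le_iff₀ (by linarith), mul_comm]
    gcongr

lemma grid_gidx {a T x : ℝ} (hax : a ≤ x) (hx : x ≤ T) (n : ℕ) :
    x ≤ grid a T n (gidx a T n x) ∧ grid a T n (gidx a T n x) ≤ x + (T - a) / (n + 1) := by
  rcases (hax.trans hx).eq_or_lt with rfl | h
  · have : x = a := le_antisymm hx hax
    subst this
    simp [grid, gidx]
  · have hn : (0:ℝ) < n + 1 := by positivity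
    have hT : 0 < T - a := by linarith
    have hd : 0 < (T - a) / (n + 1) := by positivity
    have e : (x - a) * (n + 1) / (T - a) * ((T - a) / (n + 1)) = x - a := by field_simp
    constructor
    · refine le_min hx ?_
      have := mul_le_mul_of_nonneg_right (Nat.le_ceil ((x - a) * (n + 1) / (T - a))) hd.le
      unfold gidx
      linarith
    · refine (min_le_right _ _).trans ?_
      have h0 : 0 ≤ (x - a) * (n + 1) / (T - a) :=
        div_nonneg (mul_nonneg (by linarith) hn.le) hT.le
      have := mul_le_mul_of_nonneg_right (Nat.ceil_lt_add_one h0).le hd.le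
      unfold gidx
      linarith

lemma grid_tendsto {a T x : ℝ} (hax : a ≤ x) (hx : x ≤ T) :
    Filter.Tendsto (fun n : ℕ => grid a T n (gidx a T n x)) Filter.atTop
      (nhdsWithin x (Set.Ici x)) := by
  refine tendsto_nhdsWithin_iff.mpr ⟨?_, Filter.Eventually.of_forall fun n => (grid_gidx hax hx n).1⟩
  refine tendsto_of_tendsto_of_tendsto_of_le_of_le tendsto_const_nhds ?_
    (fun n => (grid_gidx hax hx n).1) (fun n => (grid_gidx hax hx n).2)
  have h1 : Filter.Tendsto (fun n : ℕ => (T - a) * (1 / ((n:ℝ) + 1))) Filter.atTop (nhds ((T-a) * 0)) :=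
    tendsto_one_div_add_atTop_nhds_zero_nat.const_mul _
  have h2 := h1.const_add x
  simp only [mul_zero, add_zero] at h2
  refine h2.congr fun n => ?_
  ring

/-- dominating variable -/
noncomputable def Zd (X : ℝ → Ω → ℝ) (q T a : ℝ) (ω : Ω) : ENNReal :=
  Filter.liminf (fun n : ℕ => ENNReal.ofReal (gridMax X q (grid a T n) (n + 1) ω)) Filter.atTop

lemma Zd_ge (h : ProcHyp P ℱ T q X) {a s t : ℝ} (has : a ≤ s) (hst : s ≤ t) (htT : t ≤ T) (ω : Ω) :
    ENNReal.ofReal (Real.exp (X t ω - X s ω) ^ q) ≤ Zd X q T a ω := by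
  have hq := h.hq
  have haT : a ≤ T := has.trans (hst.trans htT)
  have h1 : Filter.Tendsto (fun n : ℕ => X (grid a T n (gidx a T n t)) ω) Filter.atTop
      (nhds (X t ω)) := (h.rc ω t).tendsto.comp (grid_tendsto (has.trans hst) htT)
  have h2 : Filter.Tendsto (fun n : ℕ => X (grid a T n (gidx a T n s)) ω) Filter.atTop
      (nhds (X s ω)) := (h.rc ω s).tendsto.comp (grid_tendsto has (hst.trans htT))
  have h3 := ENNReal.tendsto_ofReal
    (((Real.continuous_exp.tendsto _).comp (h1.sub h2)).rpow_const (p := q) (Or.inr (by linarith)))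
  rw [← h3.liminf_eq]
  refine Filter.liminf_le_liminf (Filter.Eventually.of_forall fun n => ?_)
  refine ENNReal.ofReal_le_ofReal ?_
  exact le_gridMax X (by linarith) (grid a T n) (gidx_mono haT n hst) (gidx_le haT n htT) ω

lemma Zd_meas (h : ProcHyp P ℱ T q X) (a : ℝ) : Measurable (Zd X q T a) := by
  refine Measurable.liminf fun n => ?_
  exact ((gridMax_meas X q (grid a T n) (n+1)).mono (h.rev_le _ _ _) le_rfl).ennreal_ofReal

lemma Zd_set (h : ProcHyp P ℱ T q X) {a : ℝ} (ha : 0 ≤ a) (haT : a ≤ T)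
    {A : Set Ω} (hA : MeasurableSet[ℱ a] A) :
    ∫⁻ ω in A, Zd X q T a ω ∂P ≤
      ENNReal.ofReal
        ((q / (q - 1)) ^ q * ((q / (q - 1)) ^ q * ∫ ω, Real.exp (q * X T ω) ∂P)) * P A := by
  unfold Zd
  refine (lintegral_liminf_le fun n => ((gridMax_meas X q (grid a T n) (n+1)).mono
    (h.rev_le _ _ _) le_rfl).ennreal_ofReal).trans ?_
  refine Filter.liminf_le_of_le (by isBoundedDefault) fun b hb => ?_
  obtain ⟨n, hn⟩ := hb.exists
  refine hn.trans (h.grid_set (grid_mono haT n) ?_ (fun i => min_le_left _ _) (n+1) ?_)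
  · rw [grid_zero haT]; exact ha
  · rw [grid_zero haT]; exact hA

lemma Zd_mul (h : ProcHyp P ℱ T q X) {a : ℝ} (ha : 0 ≤ a) (haT : a ≤ T)
    {v : Ω → ENNReal} (hv : Measurable[ℱ a] v) :
    ∫⁻ ω, Zd X q T a ω * v ω ∂P ≤
      ENNReal.ofReal
        ((q / (q - 1)) ^ q * ((q / (q - 1)) ^ q * ∫ ω, Real.exp (q * X T ω) ∂P)) *
        ∫⁻ ω, v ω ∂P := by
  set C := ENNReal.ofReal
        ((q / (q - 1)) ^ q * ((q / (q - 1)) ^ q * ∫ ω, Real.exp (q * X T ω) ∂P))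
  have h1 := lintegral_withDensity_eq_lintegral_mul P (h.Zd_meas a) (hv.mono (h.le a) le_rfl)
  simp only [Pi.mul_apply] at h1
  rw [← h1, ← lintegral_trim (h.le a) hv, ← lintegral_trim (μ := P) (h.le a) hv,
    ← smul_eq_mul, ← lintegral_smul_measure]
  refine lintegral_mono' ?_ le_rfl
  refine Measure.le_iff.mpr fun s hs => ?_
  rw [trim_measurableSet_eq _ hs, Measure.smul_apply, trim_measurableSet_eq _ hs,
    withDensity_apply _ (h.le a s hs)]
  exact h.Zd_set ha haT hs

end ProcHyp

namespace ProcHyp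

set_option linter.unusedSectionVars false

variable {Ω : Type*} [m0 : MeasurableSpace Ω] {P : Measure Ω} [IsProbabilityMeasure P]
    {ℱ : ℝ → MeasurableSpace Ω} {T q : ℝ} {X : ℝ → Ω → ℝ}

lemma ae_bdd (h : ProcHyp P ℱ T q X) :
    ∀ᵐ ω ∂P, ∃ K, ∀ s t : ℝ, 0 ≤ s → s ≤ t → t ≤ T → X t ω - X s ω ≤ K := by
  have hq := h.hq
  have h1 := h.Zd_set le_rfl h.hT.le (A := Set.univ) MeasurableSet.univ
  rw [Measure.restrict_univ, measure_univ, mul_one] at h1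
  filter_upwards [ae_lt_top (h.Zd_meas 0) (h1.trans_lt ENNReal.ofReal_lt_top).ne] with ω hω
  refine ⟨(Zd X q T 0 ω).toReal / q, fun s t hs hst ht => ?_⟩
  have h2 := h.Zd_ge hs hst ht ω
  have h3 : Real.exp (X t ω - X s ω) ^ q ≤ (Zd X q T 0 ω).toReal :=
    (ENNReal.ofReal_le_iff_le_toReal hω.ne).mp h2
  rw [← Real.exp_mul] at h3
  rw [le_div_iff₀ (by linarith)]
  linarith [Real.add_one_le_exp ((X t ω - X s ω) * q)]

/-- the process of the statement -/
noncomputable def Ph (X : ℝ → Ω → ℝ) (η t : ℝ) (ω : Ω) : ℝ :=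
  Real.exp (η * X t ω) * ⨆ s : Set.Icc (0 : ℝ) t, Real.exp ((1 - η) * (X t ω - X s.1 ω))

lemma Ph_nonneg (X : ℝ → Ω → ℝ) (η t : ℝ) (ω : Ω) : 0 ≤ Ph X η t ω :=
  mul_nonneg (Real.exp_pos _).le (Real.iSup_nonneg fun _ => (Real.exp_pos _).le)

/-- a measurable version -/
noncomputable def Pv (X : ℝ → Ω → ℝ) (η a : ℝ) (ω : Ω) : ℝ :=
  Real.exp (η * X a ω) * ⨆ r : ℚ, Real.exp ((1 - η) * (X a ω - X (max 0 (min a r)) ω))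

lemma Pv_meas (h : ProcHyp P ℱ T q X) (η : ℝ) {a : ℝ} (ha : 0 ≤ a) :
    Measurable[ℱ a] (Pv X η a) := by
  refine Measurable.mul ((h.ad a).const_mul η).exp ?_
  refine Measurable.iSup fun r => ?_
  refine (Measurable.const_mul ((h.ad a).sub ((h.ad _).mono (h.mono ?_) le_rfl)) _).exp
  exact max_le ha (min_le_left _ _)

lemma bdd_of {η : ℝ} (hη : η ∈ Set.Icc (0 : ℝ) 1) {ω : Ω} {K : ℝ}
    (hK : ∀ s t : ℝ, 0 ≤ s → s ≤ t → t ≤ T → X t ω - X s ω ≤ K) {s t : ℝ} (hs : 0 ≤ s)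
    (hst : s ≤ t) (htT : t ≤ T) :
    Real.exp ((1 - η) * (X t ω - X s ω)) ≤ Real.exp ((1 - η) * K) := by
  refine Real.exp_le_exp.mpr (mul_le_mul_of_nonneg_left (hK s t hs hst htT) ?_)
  linarith [hη.2]

lemma Pv_eq (h : ProcHyp P ℱ T q X) {η : ℝ} (hη : η ∈ Set.Icc (0 : ℝ) 1) {ω : Ω} {K : ℝ}
    (hK : ∀ s t : ℝ, 0 ≤ s → s ≤ t → t ≤ T → X t ω - X s ω ≤ K) {a : ℝ} (ha : 0 ≤ a)
    (haT : a ≤ T) : Pv X η a ω = Ph X η a ω := by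
  unfold Pv Ph
  congr 1
  haveI : Nonempty (Set.Icc (0:ℝ) a) := ⟨⟨a, ha, le_rfl⟩⟩
  have hcl : ∀ r : ℚ, 0 ≤ max 0 (min a (r:ℝ)) ∧ max 0 (min a (r:ℝ)) ≤ a := fun r =>
    ⟨le_max_left _ _, max_le ha (min_le_left _ _)⟩
  have hb1 : BddAbove (Set.range fun s : Set.Icc (0:ℝ) a =>
      Real.exp ((1 - η) * (X a ω - X s.1 ω))) := by
    refine ⟨Real.exp ((1 - η) * K), ?_⟩
    rintro _ ⟨s, rfl⟩
    exact bdd_of hη hK s.2.1 s.2.2 haT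
  have hb2 : BddAbove (Set.range fun r : ℚ =>
      Real.exp ((1 - η) * (X a ω - X (max 0 (min a r)) ω))) := by
    refine ⟨Real.exp ((1 - η) * K), ?_⟩
    rintro _ ⟨r, rfl⟩
    exact bdd_of hη hK (hcl r).1 (hcl r).2 haT
  apply le_antisymm
  · refine ciSup_le fun r => ?_
    exact le_ciSup hb1 ⟨max 0 (min a (r:ℝ)), (hcl r)⟩
  · refine ciSup_le fun s => ?_
    obtain ⟨s, hs0, hsa⟩ := s
    rcases hsa.eq_or_lt with rfl | hlt
    · obtain ⟨r, hr⟩ := exists_rat_gt s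
      have := le_ciSup hb2 r
      simp only [min_eq_left hr.le, max_eq_right ha] at this
      exact this
    · by_contra hcon
      push Not at hcon
      have hc : ContinuousWithinAt (fun u => Real.exp ((1 - η) * (X a ω - X u ω))) (Set.Ici s) s :=
        ((continuousWithinAt_const.sub (h.rc ω s)).const_mul (1 - η)).rexp
      have hev := hc.eventually (lt_mem_nhds hcon)
      obtain ⟨u, hu, hsub⟩ := (mem_nhdsGE_iff_exists_Ico_subset).mp hev
      obtain ⟨r, hr1, hr2⟩ := exists_rat_btwn (lt_min hu hlt)
      have h1 := hsub ⟨hr1.le, hr2.trans_le (min_le_left _ _)⟩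
      have h2 := le_ciSup hb2 r
      simp only [min_eq_right (hr2.le.trans (min_le_right _ _)), max_eq_right (hs0.trans hr1.le)] at h2
      exact absurd h2 (not_le.mpr h1)

lemma dom (h : ProcHyp P ℱ T q X) {η : ℝ} (hη : η ∈ Set.Icc (0 : ℝ) 1) {ω : Ω} {K : ℝ}
    (hK : ∀ s t : ℝ, 0 ≤ s → s ≤ t → t ≤ T → X t ω - X s ω ≤ K) {a : ℝ} (ha : 0 ≤ a)
    (haT : a ≤ T) :
    ENNReal.ofReal (⨆ t : Set.Icc a T, Ph X η t.1 ω ^ q) ≤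
      Zd X q T a ω * ENNReal.ofReal (Ph X η a ω ^ q) := by
  have hq := h.hq
  have hq0 : 0 < q := by linarith
  have hb1 : BddAbove (Set.range fun s : Set.Icc (0:ℝ) a =>
      Real.exp ((1 - η) * (X a ω - X s.1 ω))) := by
    refine ⟨Real.exp ((1 - η) * K), ?_⟩
    rintro _ ⟨s, rfl⟩
    exact bdd_of hη hK s.2.1 s.2.2 haT
  have hPa : ∀ s, 0 ≤ s → s ≤ a →
      Real.exp (η * X a ω) * Real.exp ((1 - η) * (X a ω - X s ω)) ≤ Ph X η a ω := by
    intro s hs hsa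
    refine mul_le_mul_of_nonneg_left ?_ (Real.exp_pos _).le
    exact le_ciSup hb1 ⟨s, hs, hsa⟩
  have hPa1 : Real.exp (η * X a ω) ≤ Ph X η a ω := by
    have := hPa a ha le_rfl
    simpa using this
  have hPpos : 0 < Ph X η a ω := (Real.exp_pos _).trans_le hPa1
  by_cases hZ : Zd X q T a ω = ⊤
  · rw [hZ, ENNReal.top_mul]
    · exact le_top
    · simpa using Real.rpow_pos_of_pos hPpos q
  set z := (Zd X q T a ω).toReal with hz
  have hz0 : 0 ≤ z := ENNReal.toReal_nonneg
  have hzb : ∀ s t, a ≤ s → s ≤ t → t ≤ T → Real.exp (X t ω - X s ω) ≤ z ^ (1/q) := by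
    intro s t hs hst ht
    have h3 : Real.exp (X t ω - X s ω) ^ q ≤ z :=
      (ENNReal.ofReal_le_iff_le_toReal hZ).mp (h.Zd_ge hs hst ht ω)
    have := Real.rpow_le_rpow (Real.rpow_nonneg (Real.exp_pos _).le _) h3
      (by positivity : 0 ≤ 1/q)
    rwa [← Real.rpow_mul (Real.exp_pos _).le, mul_one_div_cancel hq0.ne', Real.rpow_one] at this
  rw [← ENNReal.ofReal_toReal hZ, ← hz, ← ENNReal.ofReal_mul hz0]
  refine ENNReal.ofReal_le_ofReal ?_
  haveI : Nonempty (Set.Icc a T) := ⟨⟨a, le_rfl, haT⟩⟩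
  refine ciSup_le fun t => ?_
  obtain ⟨t, hat, htT⟩ := t
  have hmain : Ph X η t ω ≤ z ^ (1/q) * Ph X η a ω := by
    haveI : Nonempty (Set.Icc (0:ℝ) t) := ⟨⟨0, le_rfl, ha.trans hat⟩⟩
    rw [show Ph X η t ω = Real.exp (η * X t ω) *
      ⨆ s : Set.Icc (0 : ℝ) t, Real.exp ((1 - η) * (X t ω - X s.1 ω)) from rfl,
      mul_comm, ← le_div_iff₀ (Real.exp_pos _)]
    refine ciSup_le fun s => ?_
    obtain ⟨s, hs0, hst⟩ := s
    rw [le_div_iff₀ (Real.exp_pos _), ← Real.exp_add]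
    rcases le_total s a with hsa | hsa
    · have h1 := mul_le_mul (hzb a t le_rfl hat htT) (hPa s hs0 hsa)
        (by positivity) (by positivity)
      refine le_trans (le_of_eq ?_) h1
      rw [← Real.exp_add, ← Real.exp_add]
      congr 1; ring
    · have h1 : Real.exp (η * (X t ω - X a ω) + (1 - η) * (X t ω - X s ω)) ≤ z ^ (1/q) := by
        rcases le_total (X t ω - X a ω) (X t ω - X s ω) with hle | hle
        · refine le_trans (Real.exp_le_exp.mpr ?_) (hzb s t hsa hst htT)
          nlinarith [hη.1, hη.2]
        · refine le_trans (Real.exp_le_exp.mpr ?_) (hzb a t le_rfl hat htT)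
          nlinarith [hη.1, hη.2]
      have h2 := mul_le_mul h1 hPa1 (by positivity) (by positivity)
      refine le_trans (le_of_eq ?_) h2
      rw [← Real.exp_add]
      congr 1; ring
  have h3 := Real.rpow_le_rpow (Ph_nonneg X η t ω) hmain hq0.le
  rwa [Real.mul_rpow (by positivity) hPpos.le, ← Real.rpow_mul hz0, one_div_mul_cancel hq0.ne',
    Real.rpow_one] at h3

lemma final (h : ProcHyp P ℱ T q X) {η : ℝ} (hη : η ∈ Set.Icc (0 : ℝ) 1) {a : ℝ} (ha : 0 ≤ a)
    (haT : a ≤ T) :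
    ∀ᵐ ω ∂P, (P[(fun ω' => ⨆ t : Set.Icc a T, Ph X η t.1 ω' ^ q) | ℱ a]) ω ≤
      ((q / (q - 1)) ^ q * ((q / (q - 1)) ^ q * ∫ ω, Real.exp (q * X T ω) ∂P))
        * Ph X η a ω ^ q := by
  have hq := h.hq
  have hq1 : 0 < q - 1 := by linarith
  have hC0 : 0 ≤ (q / (q - 1)) ^ q * ((q / (q - 1)) ^ q * ∫ ω, Real.exp (q * X T ω) ∂P) := by
    have : 0 ≤ ∫ ω, Real.exp (q * X T ω) ∂P := integral_nonneg fun ω => (Real.exp_pos _).le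
    positivity
  have hmul := fun v hv => h.Zd_mul ha haT (v := v) hv
  set C := (q / (q - 1)) ^ q * ((q / (q - 1)) ^ q * ∫ ω, Real.exp (q * X T ω) ∂P) with hC
  set W : Ω → ℝ := fun ω' => ⨆ t : Set.Icc a T, Ph X η t.1 ω' ^ q with hW
  have hW0 : ∀ ω, 0 ≤ W ω := fun ω =>
    Real.iSup_nonneg fun t => Real.rpow_nonneg (Ph_nonneg X η _ ω) q
  by_cases hWi : Integrable W P
  swap
  · rw [condExp_of_not_integrable hWi]
    exact Filter.Eventually.of_forall fun ω =>
      mul_nonneg hC0 (Real.rpow_nonneg (Ph_nonneg X η a ω) q)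
  have hVm : Measurable[ℱ a] (fun ω => ENNReal.ofReal (Pv X η a ω ^ q)) :=
    ((h.Pv_meas η ha).pow_const q).ennreal_ofReal
  have hgm : Measurable[ℱ a] (fun ω => ENNReal.ofReal ((P[W | ℱ a]) ω)) :=
    stronglyMeasurable_condExp.measurable.ennreal_ofReal
  have hRm : Measurable[ℱ a] (fun ω => ENNReal.ofReal C * ENNReal.ofReal (Pv X η a ω ^ q)) :=
    hVm.const_mul _
  have hg0 : 0 ≤ᵐ[P] P[W | ℱ a] := condExp_nonneg (Filter.Eventually.of_forall hW0)
  have key : (fun ω => ENNReal.ofReal ((P[W | ℱ a]) ω)) ≤ᵐ[P.trim (h.le a)]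
      fun ω => ENNReal.ofReal C * ENNReal.ofReal (Pv X η a ω ^ q) := by
    refine ae_le_of_forall_setLIntegral_le_of_sigmaFinite hgm fun s hs _ => ?_
    rw [restrict_trim (h.le a) P hs, lintegral_trim (h.le a) hgm, lintegral_trim (h.le a) hRm]
    rw [← ofReal_integral_eq_lintegral_ofReal integrable_condExp.integrableOn
      (ae_restrict_of_ae hg0), setIntegral_condExp (h.le a) hWi hs,
      ofReal_integral_eq_lintegral_ofReal hWi.integrableOn
      (ae_restrict_of_ae (Filter.Eventually.of_forall hW0))]
    have hs' : MeasurableSet s := h.le a s hs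
    calc ∫⁻ ω in s, ENNReal.ofReal (W ω) ∂P
        ≤ ∫⁻ ω in s, Zd X q T a ω * ENNReal.ofReal (Pv X η a ω ^ q) ∂P := by
          refine lintegral_mono_ae (ae_restrict_of_ae ?_)
          filter_upwards [h.ae_bdd] with ω ⟨K, hK⟩
          rw [h.Pv_eq hη hK ha haT]
          exact h.dom hη hK ha haT
      _ = ∫⁻ ω, Zd X q T a ω * s.indicator (fun ω => ENNReal.ofReal (Pv X η a ω ^ q)) ω ∂P := by
          rw [← lintegral_indicator hs']
          congr 1; ext ω
          by_cases hω : ω ∈ s <;> simp [hω]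
      _ ≤ ENNReal.ofReal C * ∫⁻ ω, s.indicator (fun ω => ENNReal.ofReal (Pv X η a ω ^ q)) ω ∂P :=
          hmul _ (hVm.indicator hs)
      _ = ∫⁻ ω in s, ENNReal.ofReal C * ENNReal.ofReal (Pv X η a ω ^ q) ∂P := by
          rw [lintegral_indicator hs', lintegral_const_mul _ (hVm.mono (h.le a) le_rfl)]
  have key' := ae_le_of_ae_le_trim key
  filter_upwards [key', h.ae_bdd] with ω hω ⟨K, hK⟩
  rw [h.Pv_eq hη hK ha haT, ← ENNReal.ofReal_mul hC0] at hω
  exact (ENNReal.ofReal_le_ofReal_iff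
    (mul_nonneg hC0 (Real.rpow_nonneg (Ph_nonneg X η a ω) q))).mp hω

end ProcHyp

theorem stmt_14 {Ω : Type*} [m0 : MeasurableSpace Ω] (P : Measure Ω) [IsProbabilityMeasure P]
    (ℱ : ℝ → MeasurableSpace Ω) (hℱle : ∀ t, ℱ t ≤ m0) (hℱmono : Monotone ℱ)
    (T q η : ℝ) (hT : 0 < T) (hq : 1 < q) (hη : η ∈ Set.Icc (0 : ℝ) 1)
    (X : ℝ → Ω → ℝ)
    (hX0 : ∀ ω, X 0 ω = 0)
    (hXad : ∀ t, Measurable[ℱ t] (X t))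
    (hXrc : ∀ ω t, ContinuousWithinAt (fun s => X s ω) (Set.Ici t) t)
    (hindep : ∀ s t : ℝ, 0 ≤ s → s ≤ t →
      ProbabilityTheory.Indep
        (MeasurableSpace.comap (fun ω => X t ω - X s ω) inferInstance) (ℱ s) P)
    (hstat : ∀ s t : ℝ, 0 ≤ s → s ≤ t →
      Measure.map (fun ω => X t ω - X s ω) P = Measure.map (X (t - s)) P)
    -- `E e^{q X_T} < ∞`
    (hint : Integrable (fun ω => Real.exp (q * X T ω)) P)
    -- `S = e^X` is a martingale
    (hmart : ∀ s t : ℝ, 0 ≤ s → s ≤ t → t ≤ T →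
      (fun ω => Real.exp (X s ω)) =ᵐ[P] P[(fun ω => Real.exp (X t ω)) | ℱ s]) :
    -- `Φ(η) ∈ SM_q(P)` with the explicit constant
    2 ^ ((1 - η) / q) * (q / (q - 1)) ^ (2 : ℕ)
        * (∫ ω, Real.exp (q * X T ω) ∂P) ^ (1 / q)
      ∈ smSet P ℱ T q
        (fun t ω => Real.exp (η * X t ω) *
          ⨆ s : Set.Icc (0 : ℝ) t, Real.exp ((1 - η) * (X t ω - X s.1 ω))) := by
  have h : ProcHyp P ℱ T q X := ⟨hℱle, hℱmono, hT, hq, hX0, hXad, hXrc, hindep, hint, hmart⟩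
  have hq1 : 0 < q - 1 := by linarith
  have hq0 : 0 < q := by linarith
  have hI : 0 ≤ ∫ ω, Real.exp (q * X T ω) ∂P := integral_nonneg fun ω => (Real.exp_pos _).le
  refine ⟨by positivity, fun a ha => ?_⟩
  filter_upwards [h.final hη ha.1 ha.2] with ω hω
  refine hω.trans ?_
  refine mul_le_mul_of_nonneg_right ?_ (Real.rpow_nonneg (ProcHyp.Ph_nonneg X η a ω) q)
  have hc : 0 ≤ q / (q - 1) := by positivity
  rw [Real.mul_rpow (by positivity) (by positivity), Real.mul_rpow (by positivity) (by positivity),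
    ← Real.rpow_mul hI, one_div_mul_cancel hq0.ne', Real.rpow_one, ← Real.rpow_mul (by norm_num),
    div_mul_cancel₀ _ hq0.ne', sq, Real.mul_rpow hc hc]
  have h2 : (1:ℝ) ≤ 2 ^ (1 - η) := Real.one_le_rpow (by norm_num) (by linarith [hη.2])
  have h3 : 0 ≤ (q / (q - 1)) ^ q * (q / (q - 1)) ^ q * ∫ ω, Real.exp (q * X T ω) ∂P := by
    positivity
  have := mul_le_mul_of_nonneg_right h2 h3
  linarith
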